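/- Let 0 < p < 1. Then the norm of the point evaluation functional δ_z on the derivative Hardy space S^p satisfies ‖δ_z‖ ≍ 1/(1-|z|²)^{1/p-1}, i.e., there exist constants c, C > 0 independent of z ∈ 𝔻 such that c/(1-|z|²)^{1/p-1} ≤ sup{|f(z)| : f ∈ S^p, ‖f‖_{S^p} ≤ 1} ≤ C/(1-|z|²)^{1/p-1} for all z ∈ 𝔻. -/

import Mathlib

open MeasureTheory Metric Set Filter Topology ENNReal

noncomputable section

/-- The open unit disk in ℂ. -/
def unitDisk : Set ℂ := Metric.ball (0 : ℂ) 1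

/-- The normalized Lebesgue measure on the unit circle, parameterized by the angle
`θ ∈ (0, 2π]`. -/
def circleMeasure : Measure ℝ :=
  (ENNReal.ofReal (2 * Real.pi)⁻¹) • (volume.restrict (Set.Ioc 0 (2 * Real.pi)))

/-- `∫_{∂𝔻} |f(r ξ)|^p dm(ξ)`, as an extended nonnegative real. -/
def hardyLintegral (p : ℝ) (f : ℂ → ℂ) (r : ℝ) : ℝ≥0∞ :=
  ∫⁻ θ, ENNReal.ofReal (‖f ((r : ℂ) * Complex.exp ((θ : ℂ) * Complex.I))‖ ^ p) ∂circleMeasure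

/-- `sup_{0 ≤ r < 1} ∫_{∂𝔻} |f(r ξ)|^p dm(ξ)`. -/
def hardySup (p : ℝ) (f : ℂ → ℂ) : ℝ≥0∞ :=
  ⨆ r : Set.Ico (0 : ℝ) 1, hardyLintegral p f r

/-- Membership in the derivative Hardy space `S^p`: analytic on 𝔻 with `f' ∈ H^p`. -/
def MemS (p : ℝ) (f : ℂ → ℂ) : Prop :=
  DifferentiableOn ℂ f unitDisk ∧ hardySup p (deriv f) < ⊤

/-- The norm of the derivative Hardy space `S^p`: `|f(0)| + ‖f'‖_{H^p}`. -/
def sNorm (p : ℝ) (f : ℂ → ℂ) : ℝ :=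
  ‖f 0‖ + ((hardySup p (deriv f)).toReal) ^ (1 / p)

/-!
Upper bound: for `p ≤ 1` every `g ∈ H^p` satisfies `‖g z‖ ≤ C ‖g‖_{H^p} / (1 - ‖z‖) ^ (1 / p)`.
Subharmonicity of `‖g‖ ^ p` is replaced by a self-improving estimate: at a maximum point `z₀` of
`(R - ‖w‖) * ‖g w‖ ^ p`, halving the distance to the boundary at most doubles `‖g‖ ^ p`, so
Cauchy's formula on that circle bounds `‖g z₀‖` by `(2 * ‖g z₀‖ ^ p) ^ (1 / p - 1)` times the mean
of `‖g‖ ^ p`, and the surplus power of `‖g z₀‖` cancels. Applied to `g = f'` and integrated along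
the radius this bounds `f z`.

Lower bound: the functions `(1 - ‖a‖ ^ 2) ^ (1 / p) * (1 - conj a * w) ^ (1 - 2 / p)` are bounded
in `S^p` uniformly in `a`, because the `p`-th power of the derivative is at most a constant
times `(1 - ‖a‖ ^ 2) / ‖1 - conj a * w‖ ^ 2`, which is essentially the Poisson kernel.
-/

section CircleAverage

variable {E : Type*} [NormedAddCommGroup E] {f : ℂ → E} {c : ℂ} {p K R : ℝ}

lemma norm_circleAverage_le [NormedSpace ℝ E] (f : ℂ → E) (c : ℂ) (R : ℝ) :
    ‖Real.circleAverage f c R‖ ≤ Real.circleAverage (fun w ↦ ‖f w‖) c R := by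
  rw [Real.circleAverage_def, Real.circleAverage_def, norm_smul, smul_eq_mul,
    Real.norm_of_nonneg (by positivity)]
  gcongr
  exact intervalIntegral.norm_integral_le_integral_norm (by positivity)

lemma circleIntegrable_norm_rpow (hp : 0 ≤ p) (hf : ContinuousOn f (sphere c |R|)) :
    CircleIntegrable (fun w ↦ ‖f w‖ ^ p) c R :=
  (hf.norm.rpow_const fun _ _ ↦ Or.inr hp).circleIntegrable'

lemma circleAverage_norm_le_of_rpow_le {M : ℝ} (hp : 0 < p) (hp1 : p ≤ 1)
    (hf : ContinuousOn f (sphere c |R|)) (hM : ∀ w ∈ sphere c |R|, ‖f w‖ ^ p ≤ M) :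
    Real.circleAverage (fun w ↦ ‖f w‖) c R ≤
      M ^ (1 / p - 1) * Real.circleAverage (fun w ↦ ‖f w‖ ^ p) c R := by
  have hexp : 0 ≤ 1 / p - 1 := sub_nonneg.2 ((one_le_div hp).2 hp1)
  have hpoint : ∀ w ∈ sphere c |R|, ‖f w‖ ≤ M ^ (1 / p - 1) * ‖f w‖ ^ p := by
    intro w hw
    calc ‖f w‖ = (‖f w‖ ^ p) ^ (1 / p - 1 + 1) := by
          rw [sub_add_cancel, one_div, Real.rpow_rpow_inv (norm_nonneg _) hp.ne']
      _ = (‖f w‖ ^ p) ^ (1 / p - 1) * ‖f w‖ ^ p := by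
          rw [Real.rpow_add_one' (by positivity) (by simp [hp.ne'])]
      _ ≤ M ^ (1 / p - 1) * ‖f w‖ ^ p := by
          gcongr
          exact hM w hw
  rw [← smul_eq_mul, ← Real.circleAverage_fun_smul]
  exact Real.circleAverage_mono hf.norm.circleIntegrable'
    (circleIntegrable_norm_rpow hp.le hf).const_fun_smul hpoint

variable [NormedSpace ℂ E] [CompleteSpace E]

lemma norm_le_mul_circleAverage_norm {z : ℂ} (hf : DiffContOnCl ℂ f (ball c R))
    (hz : z ∈ ball c R) :
    ‖f z‖ ≤ R / (R - dist z c) * Real.circleAverage (fun w ↦ ‖f w‖) c R := by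
  have hR : 0 < R := pos_of_mem_ball hz
  have hgap : 0 < R - dist z c := sub_pos.2 hz
  rw [← abs_of_pos hR] at hf hz
  have hcont : ContinuousOn f (sphere c |R|) := hf.continuousOn_ball.mono sphere_subset_closedBall
  have hsub : ∀ w ∈ sphere c |R|, R - dist z c ≤ ‖w - z‖ := fun w hw ↦ by
    rw [mem_sphere, abs_of_pos hR] at hw
    rw [← dist_eq_norm, sub_le_iff_le_add, ← hw]
    exact dist_triangle w z c
  have hcauchy : ContinuousOn (fun w ↦ ((w - c) / (w - z)) • f w) (sphere c |R|) := by
    refine ContinuousOn.smul (ContinuousOn.div (by fun_prop) (by fun_prop) fun w hw ↦ ?_) hcont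
    exact norm_pos_iff.1 (hgap.trans_le (hsub w hw))
  calc ‖f z‖ = ‖Real.circleAverage (fun w ↦ ((w - c) / (w - z)) • f w) c R‖ := by
        rw [hf.circleAverage_smul_div hz]
    _ ≤ Real.circleAverage (fun w ↦ ‖((w - c) / (w - z)) • f w‖) c R := norm_circleAverage_le _ _ _
    _ ≤ Real.circleAverage (fun w ↦ (R / (R - dist z c)) • ‖f w‖) c R := by
        refine Real.circleAverage_mono hcauchy.norm.circleIntegrable'
          hcont.norm.circleIntegrable'.const_fun_smul fun w hw ↦ ?_
        have hw' : ‖w - c‖ = R := by rwa [← dist_eq_norm, ← abs_of_pos hR]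
        rw [norm_smul, norm_div, hw', smul_eq_mul]
        gcongr
        exact hsub w hw
    _ = R / (R - dist z c) * Real.circleAverage (fun w ↦ ‖f w‖) c R := by
        rw [Real.circleAverage_fun_smul, smul_eq_mul]

lemma sub_dist_mul_norm_rpow_le_of_le_two_mul {z : ℂ} (hp : 0 < p) (hp1 : p ≤ 1)
    (hf : DiffContOnCl ℂ f (ball c R)) (hz : z ∈ ball c R)
    (hdouble : ∀ w ∈ sphere c R, ‖f w‖ ^ p ≤ 2 * ‖f z‖ ^ p)
    (hK : Real.circleAverage (fun w ↦ ‖f w‖ ^ p) c R ≤ K) :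
    (R - dist z c) * ‖f z‖ ^ p ≤ 2 ^ (1 / p - 1) * R * K := by
  have hR : 0 < R := pos_of_mem_ball hz
  have hgap : 0 < R - dist z c := sub_pos.2 hz
  have hK0 : 0 ≤ K :=
    (Real.circleAverage_nonneg_of_nonneg fun w _ ↦ by positivity).trans hK
  rcases (norm_nonneg (f z)).eq_or_lt with hzero | hpos
  · rw [← hzero, Real.zero_rpow hp.ne', mul_zero]
    positivity
  have hcont : ContinuousOn f (sphere c |R|) := by
    rw [abs_of_pos hR]
    exact hf.continuousOn_ball.mono sphere_subset_closedBall
  set m := ‖f z‖ ^ p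
  have hm0 : 0 < m := by positivity
  have hnorm : m * m ^ (1 / p - 1) = ‖f z‖ := by
    rw [← Real.rpow_one_add' hm0.le (by simp [hp.ne']), add_sub_cancel, one_div,
      Real.rpow_rpow_inv hpos.le hp.ne']
  have hestimate : m * m ^ (1 / p - 1) ≤ R / (R - dist z c) * ((2 * m) ^ (1 / p - 1) * K) :=
    calc m * m ^ (1 / p - 1) ≤ R / (R - dist z c) * Real.circleAverage (fun w ↦ ‖f w‖) c R :=
          hnorm.trans_le (norm_le_mul_circleAverage_norm hf hz)
      _ ≤ R / (R - dist z c) * ((2 * m) ^ (1 / p - 1) * K) := by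
          gcongr
          refine (circleAverage_norm_le_of_rpow_le hp hp1 hcont ?_).trans (by gcongr)
          rwa [abs_of_pos hR]
  rw [Real.mul_rpow zero_le_two hm0.le, div_mul_eq_mul_div, le_div_iff₀ hgap] at hestimate
  refine le_of_mul_le_mul_right ?_ (Real.rpow_pos_of_pos hm0 (1 / p - 1))
  linarith

lemma sub_dist_mul_norm_rpow_le_of_diffContOnCl {z : ℂ} (hp : 0 < p) (hp1 : p ≤ 1)
    (hf : DiffContOnCl ℂ f (ball c R)) (hz : z ∈ closedBall c R)
    (hK : ∀ r ∈ Ico 0 R, Real.circleAverage (fun w ↦ ‖f w‖ ^ p) c r ≤ K) :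
    (R - dist z c) * ‖f z‖ ^ p ≤ 2 ^ (1 / p) * R * K := by
  have hcont : ContinuousOn (fun w ↦ (R - dist w c) * ‖f w‖ ^ p) (closedBall c R) :=
    (by fun_prop : Continuous fun w ↦ R - dist w c).continuousOn.mul
      (hf.continuousOn_ball.norm.rpow_const fun _ _ ↦ Or.inr hp.le)
  obtain ⟨z₀, hz₀, hmax⟩ := (isCompact_closedBall c R).exists_isMaxOn ⟨z, hz⟩ hcont
  refine (hmax hz).trans ?_
  change (R - dist z₀ c) * ‖f z₀‖ ^ p ≤ _
  have hd0 : 0 ≤ dist z₀ c := dist_nonneg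
  rcases (mem_closedBall.1 hz₀).eq_or_lt with hbdry | hinterior
  · rw [hbdry, sub_self, zero_mul]
    rcases (hd0.trans_eq hbdry).eq_or_lt with hR | hR
    · simp [← hR]
    have hK0 : 0 ≤ K :=
      (Real.circleAverage_nonneg_of_nonneg fun w _ ↦ by positivity).trans (hK 0 ⟨le_rfl, hR⟩)
    positivity
  set r := (R + dist z₀ c) / 2 with hr
  have hrR : r < R := by linarith
  have hz₀r : z₀ ∈ ball c r := by rw [mem_ball]; linarith
  have hdouble : ∀ w ∈ sphere c r, ‖f w‖ ^ p ≤ 2 * ‖f z₀‖ ^ p := fun w hw ↦ by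
    have hw' : (R - dist w c) * ‖f w‖ ^ p ≤ (R - dist z₀ c) * ‖f z₀‖ ^ p :=
      hmax (sphere_subset_closedBall.trans (closedBall_subset_closedBall hrR.le) hw)
    have hhalf : R - dist w c = (R - dist z₀ c) / 2 := by rw [mem_sphere.1 hw, hr]; ring
    rw [hhalf] at hw'
    refine le_of_mul_le_mul_left ?_ (half_pos (sub_pos.2 hinterior))
    linarith
  have hKr : Real.circleAverage (fun w ↦ ‖f w‖ ^ p) c r ≤ K := hK r ⟨by linarith, hrR⟩
  have hK0 : 0 ≤ K := (Real.circleAverage_nonneg_of_nonneg fun w _ ↦ by positivity).trans hKr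
  calc (R - dist z₀ c) * ‖f z₀‖ ^ p = 2 * ((r - dist z₀ c) * ‖f z₀‖ ^ p) := by rw [hr]; ring
    _ ≤ 2 * (2 ^ (1 / p - 1) * r * K) :=
        mul_le_mul_of_nonneg_left (sub_dist_mul_norm_rpow_le_of_le_two_mul hp hp1
          (hf.mono (ball_subset_ball hrR.le)) hz₀r hdouble hKr) zero_le_two
    _ = 2 ^ (1 / p) * r * K := by rw [Real.rpow_sub_one two_ne_zero]; ring
    _ ≤ 2 ^ (1 / p) * R * K := by gcongr

lemma sub_dist_mul_norm_rpow_le {z : ℂ} (hp : 0 < p) (hp1 : p ≤ 1)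
    (hf : DifferentiableOn ℂ f (ball c R)) (hz : z ∈ ball c R)
    (hK : ∀ r ∈ Ico 0 R, Real.circleAverage (fun w ↦ ‖f w‖ ^ p) c r ≤ K) :
    (R - dist z c) * ‖f z‖ ^ p ≤ 2 ^ (1 / p) * R * K := by
  have hlhs : Continuous fun ρ ↦ (ρ - dist z c) * ‖f z‖ ^ p := by fun_prop
  have hrhs : Continuous fun ρ : ℝ ↦ 2 ^ (1 / p) * ρ * K := by fun_prop
  refine le_of_tendsto_of_tendsto (hlhs.continuousWithinAt (s := Iio R))
    (hrhs.continuousWithinAt (s := Iio R)) ?_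
  filter_upwards [Ioo_mem_nhdsLT (mem_ball.1 hz)] with ρ ⟨hzρ, hρR⟩
  exact sub_dist_mul_norm_rpow_le_of_diffContOnCl hp hp1
    (hf.mono (closure_ball_subset_closedBall.trans (closedBall_subset_ball hρR))).diffContOnCl
    hzρ.le fun r hr ↦ hK r ⟨hr.1, hr.2.trans hρR⟩

end CircleAverage

section RadialIntegration

variable {E : Type*} [NormedAddCommGroup E] [NormedSpace ℂ E] {f : ℂ → E} {R : ℝ} {z : ℂ}

lemma norm_sub_le_of_norm_deriv_le_radial {φ φ' : ℝ → ℝ} (hf : DifferentiableOn ℂ f (ball 0 R))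
    (hφ : ∀ t ∈ Ico 0 R, HasDerivAt φ (φ' t) t)
    (hle : ∀ w ∈ ball (0 : ℂ) R, ‖deriv f w‖ ≤ φ' ‖w‖) (hz : z ∈ ball 0 R) :
    ‖f z - f 0‖ ≤ φ ‖z‖ - φ 0 := by
  have hnorm : ∀ t ∈ Icc (0 : ℝ) 1, ‖(t : ℂ) * z‖ = t * ‖z‖ := fun t ht ↦ by
    rw [norm_mul, Complex.norm_of_nonneg ht.1]
  have hmem : ∀ t ∈ Icc (0 : ℝ) 1, (t : ℂ) * z ∈ ball 0 R := fun t ht ↦ by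
    rw [mem_ball_zero_iff, hnorm t ht]
    exact (mul_le_of_le_one_left (norm_nonneg z) ht.2).trans_lt (mem_ball_zero_iff.1 hz)
  have hpath : ∀ t ∈ Icc (0 : ℝ) 1,
      HasDerivAt (fun t : ℝ ↦ f (t * z) - f 0) (z • deriv f (t * z)) t := fun t ht ↦ by
    have hline : HasDerivAt (fun t : ℝ ↦ (t : ℂ) * z) z t := by
      simpa only [id_eq, Complex.ofReal_one, one_mul] using
        (hasDerivAt_id t).ofReal_comp.mul_const z
    exact ((hf.differentiableAt (isOpen_ball.mem_nhds (hmem t ht))).hasDerivAt.scomp t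
      hline).sub_const _
  have hbound : ∀ t ∈ Icc (0 : ℝ) 1,
      HasDerivAt (fun t ↦ φ (t * ‖z‖) - φ 0) (φ' (t * ‖z‖) * ‖z‖) t := fun t ht ↦ by
    have hmemIco : t * ‖z‖ ∈ Ico 0 R :=
      ⟨mul_nonneg ht.1 (norm_nonneg z), hnorm t ht ▸ mem_ball_zero_iff.1 (hmem t ht)⟩
    exact ((hφ _ hmemIco).comp t (hasDerivAt_mul_const ‖z‖)).sub_const _
  have hend := image_norm_le_of_norm_deriv_right_le_deriv_boundary'
    (fun t ht ↦ (hpath t ht).continuousAt.continuousWithinAt)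
    (fun t ht ↦ (hpath t (Ico_subset_Icc_self ht)).hasDerivWithinAt)
    (by simp)
    (fun t ht ↦ (hbound t ht).continuousAt.continuousWithinAt)
    (fun t ht ↦ (hbound t (Ico_subset_Icc_self ht)).hasDerivWithinAt)
    (fun t ht ↦ by
      have ht' := Ico_subset_Icc_self ht
      rw [norm_smul, mul_comm, ← hnorm t ht']
      exact mul_le_mul_of_nonneg_right (hle _ (hmem t ht')) (norm_nonneg z))
    (right_mem_Icc.2 zero_le_one)
  simpa only [Complex.ofReal_one, one_mul] using hend

lemma norm_sub_le_of_norm_deriv_le_rpow {A s : ℝ} (hs : s ≠ 0)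
    (hf : DifferentiableOn ℂ f (ball 0 1))
    (hle : ∀ w ∈ ball (0 : ℂ) 1, ‖deriv f w‖ ≤ A * (1 - ‖w‖) ^ (-(s + 1)))
    (hz : z ∈ ball 0 1) :
    ‖f z - f 0‖ ≤ A / s * ((1 - ‖z‖) ^ (-s) - 1) := by
  have hprim : ∀ t ∈ Ico (0 : ℝ) 1, HasDerivAt (fun t ↦ A / s * (1 - t) ^ (-s))
      (A * (1 - t) ^ (-(s + 1))) t := fun t ht ↦ by
    have hpow := (((hasDerivAt_id t).const_sub 1).rpow_const (p := -s)
      (Or.inl (sub_pos.2 ht.2).ne')).const_mul (A / s)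
    refine hpow.congr_deriv ?_
    rw [neg_add']
    simp only [id_eq]
    field_simp
  refine (norm_sub_le_of_norm_deriv_le_radial hf hprim hle hz).trans_eq ?_
  rw [sub_zero, Real.one_rpow]
  ring

end RadialIntegration

/-- The Hardy space (quasi-)norm `‖g‖_{H^p}`, with the junk value `0` when the means of `‖g‖ ^ p`
are unbounded. -/
def hardyNorm (p : ℝ) (g : ℂ → ℂ) : ℝ :=
  (hardySup p g).toReal ^ (1 / p)

section HardyNorm

variable {f g : ℂ → ℂ} {p r : ℝ} {z : ℂ}

lemma mem_unitDisk : z ∈ unitDisk ↔ ‖z‖ < 1 :=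
  mem_ball_zero_iff

lemma sphere_abs_subset_unitDisk (hr : r ∈ Ico (0 : ℝ) 1) : sphere 0 |r| ⊆ unitDisk :=
  sphere_subset_ball ((abs_of_nonneg hr.1).trans_lt hr.2)

lemma one_sub_norm_sq_pos (hz : z ∈ unitDisk) : 0 < 1 - ‖z‖ ^ 2 :=
  sub_pos.2 ((sq_lt_one_iff₀ (norm_nonneg z)).2 (mem_unitDisk.1 hz))

lemma hardyLintegral_eq_ofReal_circleAverage (hp : 0 ≤ p) (hg : ContinuousOn g (sphere 0 |r|)) :
    hardyLintegral p g r = ENNReal.ofReal (Real.circleAverage (fun w ↦ ‖g w‖ ^ p) 0 r) := by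
  have hint : IntegrableOn (fun θ ↦ ‖g (circleMap 0 r θ)‖ ^ p) (Ioc 0 (2 * Real.pi)) :=
    (intervalIntegrable_iff_integrableOn_Ioc_of_le Real.two_pi_pos.le).1
      (circleIntegrable_norm_rpow hp hg)
  rw [hardyLintegral, circleMeasure, lintegral_smul_measure, Real.circleAverage_def, smul_eq_mul,
    smul_eq_mul, ENNReal.ofReal_mul (by positivity),
    intervalIntegral.integral_of_le Real.two_pi_pos.le,
    ofReal_integral_eq_lintegral_ofReal hint (.of_forall fun θ ↦ by positivity)]
  simp only [circleMap, zero_add]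

lemma circleAverage_le_toReal_hardySup (hp : 0 ≤ p) (hg : ContinuousOn g unitDisk)
    (hfin : hardySup p g < ⊤) (hr : r ∈ Ico (0 : ℝ) 1) :
    Real.circleAverage (fun w ↦ ‖g w‖ ^ p) 0 r ≤ (hardySup p g).toReal := by
  rw [← ENNReal.ofReal_le_iff_le_toReal hfin.ne, ← hardyLintegral_eq_ofReal_circleAverage hp
    (hg.mono (sphere_abs_subset_unitDisk hr))]
  exact le_iSup (fun r : Ico (0 : ℝ) 1 ↦ hardyLintegral p g r) ⟨r, hr⟩

lemma hardySup_le_ofReal {K : ℝ} (hp : 0 ≤ p) (hg : ContinuousOn g unitDisk)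
    (hK : ∀ r ∈ Ico (0 : ℝ) 1, Real.circleAverage (fun w ↦ ‖g w‖ ^ p) 0 r ≤ K) :
    hardySup p g ≤ ENNReal.ofReal K :=
  iSup_le fun ⟨r, hr⟩ ↦ by
    rw [hardyLintegral_eq_ofReal_circleAverage hp
      (hg.mono (sphere_abs_subset_unitDisk hr))]
    exact ENNReal.ofReal_le_ofReal (hK r hr)

lemma hardyNorm_le_of_hardySup_le {A : ℝ} (hp : 0 < p) (hA : 0 ≤ A)
    (hle : hardySup p g ≤ ENNReal.ofReal (A ^ p)) : hardyNorm p g ≤ A := by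
  rw [hardyNorm, one_div, Real.rpow_inv_le_iff_of_pos ENNReal.toReal_nonneg hA hp]
  exact ENNReal.toReal_le_of_le_ofReal (by positivity) hle

lemma norm_le_hardyNorm (hp : 0 < p) (hp1 : p ≤ 1) (hg : DifferentiableOn ℂ g unitDisk)
    (hfin : hardySup p g < ⊤) (hz : z ∈ unitDisk) :
    ‖g z‖ ≤ (2 ^ (1 / p)) ^ (1 / p) * hardyNorm p g * (1 - ‖z‖) ^ (-(1 / p)) := by
  have hgap : 0 < 1 - ‖z‖ := sub_pos.2 (mem_unitDisk.1 hz)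
  have hgrowth := sub_dist_mul_norm_rpow_le hp hp1 hg hz
    fun r hr ↦ circleAverage_le_toReal_hardySup hp.le hg.continuousOn hfin hr
  rw [dist_zero_right, mul_one, mul_comm, ← le_div_iff₀ hgap] at hgrowth
  calc ‖g z‖ ≤ (2 ^ (1 / p) * (hardySup p g).toReal / (1 - ‖z‖)) ^ (1 / p) := by
        rw [one_div p, Real.le_rpow_inv_iff_of_pos (norm_nonneg _) (by positivity) hp, ← one_div]
        exact hgrowth
    _ = (2 ^ (1 / p)) ^ (1 / p) * hardyNorm p g * (1 - ‖z‖) ^ (-(1 / p)) := by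
        rw [Real.div_rpow (by positivity) hgap.le, Real.mul_rpow (by positivity) (by positivity),
          Real.rpow_neg hgap.le, div_eq_mul_inv, hardyNorm]

lemma MemS.differentiableOn_deriv (hf : MemS p f) : DifferentiableOn ℂ (deriv f) unitDisk :=
  DifferentiableOn.deriv hf.1 isOpen_ball

lemma sNorm_eq_norm_add_hardyNorm : sNorm p f = ‖f 0‖ + hardyNorm p (deriv f) :=
  rfl

lemma one_sub_norm_rpow_neg_le {s : ℝ} (hs : 0 ≤ s) (hz : z ∈ unitDisk) :
    (1 - ‖z‖) ^ (-s) ≤ 2 ^ s / (1 - ‖z‖ ^ 2) ^ s := by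
  have hlt := mem_unitDisk.1 hz
  have hδ := one_sub_norm_sq_pos hz
  calc (1 - ‖z‖) ^ (-s) ≤ ((1 - ‖z‖ ^ 2) / 2) ^ (-s) :=
        Real.rpow_le_rpow_of_nonpos (by positivity) (by nlinarith) (neg_nonpos.2 hs)
    _ = 2 ^ s / (1 - ‖z‖ ^ 2) ^ s := by
        rw [Real.rpow_neg (by positivity), Real.div_rpow hδ.le zero_le_two, inv_div]

lemma exists_norm_le_mul_sNorm (hp : 0 < p) (hp1 : p < 1) :
    ∃ C > 0, ∀ f, MemS p f → ∀ z ∈ unitDisk,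
      ‖f z‖ ≤ C * sNorm p f / (1 - ‖z‖ ^ 2) ^ (1 / p - 1) := by
  have hs : 0 < 1 / p - 1 := sub_pos.2 ((one_lt_div hp).2 hp1)
  set s := 1 / p - 1 with hsdef
  set B : ℝ := (2 ^ (1 / p)) ^ (1 / p) / s * 2 ^ s with hB
  have hB0 : 0 < B := by positivity
  refine ⟨1 + B, by positivity, fun f hf z hz ↦ ?_⟩
  have hδ := one_sub_norm_sq_pos hz
  set N := hardyNorm p (deriv f)
  have hN0 : 0 ≤ N := Real.rpow_nonneg ENNReal.toReal_nonneg _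
  have hincrement : ‖f z - f 0‖ ≤ B * N / (1 - ‖z‖ ^ 2) ^ s :=
    calc ‖f z - f 0‖ ≤ (2 ^ (1 / p)) ^ (1 / p) * N / s * ((1 - ‖z‖) ^ (-s) - 1) := by
          refine norm_sub_le_of_norm_deriv_le_rpow hs.ne' hf.1 (fun w hw ↦ ?_) hz
          rw [hsdef, sub_add_cancel]
          exact norm_le_hardyNorm hp hp1.le hf.differentiableOn_deriv hf.2 hw
      _ ≤ (2 ^ (1 / p)) ^ (1 / p) * N / s * (2 ^ s / (1 - ‖z‖ ^ 2) ^ s) := by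
          gcongr
          exact (sub_le_self _ zero_le_one).trans (one_sub_norm_rpow_neg_le hs.le hz)
      _ = B * N / (1 - ‖z‖ ^ 2) ^ s := by rw [hB]; ring
  have hcenter : ‖f 0‖ ≤ ‖f 0‖ / (1 - ‖z‖ ^ 2) ^ s :=
    le_div_self (norm_nonneg _) (by positivity)
      (Real.rpow_le_one hδ.le (sub_le_self _ (sq_nonneg _)) hs.le)
  calc ‖f z‖ ≤ ‖f 0‖ + ‖f z - f 0‖ := norm_le_insert' _ _
    _ ≤ (‖f 0‖ + B * N) / (1 - ‖z‖ ^ 2) ^ s := by rw [add_div]; gcongr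
    _ ≤ (1 + B) * sNorm p f / (1 - ‖z‖ ^ 2) ^ s := by
        rw [sNorm_eq_norm_add_hardyNorm]
        gcongr
        nlinarith [mul_nonneg hB0.le (norm_nonneg (f 0))]

end HardyNorm

section PeakFunction

open scoped ComplexConjugate

variable {p r : ℝ} {a w : ℂ}

lemma one_sub_conj_mul_mem_slitPlane (h : ‖a‖ * ‖w‖ < 1) : 1 - conj a * w ∈ Complex.slitPlane := by
  rw [sub_eq_add_neg]
  exact Complex.mem_slitPlane_of_norm_lt_one (by simpa using h)

lemma norm_sub_mul_norm_sq (a w : ℂ) :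
    ‖w - a * ‖w‖ ^ 2‖ = ‖w‖ * ‖1 - conj a * w‖ := by
  have hfactor : w - a * ‖w‖ ^ 2 = w * conj (1 - conj a * w) := by
    rw [← Complex.mul_conj']
    simp only [map_sub, map_one, map_mul, Complex.conj_conj]
    ring
  rw [hfactor, norm_mul, Complex.norm_conj]

lemma circleAverage_inv_norm_one_sub_conj_mul_sq (hr : 0 ≤ r) (har : ‖a‖ * r < 1) :
    Real.circleAverage (fun w ↦ (‖1 - conj a * w‖ ^ 2)⁻¹) 0 r = (1 - (‖a‖ * r) ^ 2)⁻¹ := by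
  rcases hr.eq_or_lt with rfl | hpos
  · simp
  have hnorm : ‖a * r ^ 2‖ = ‖a‖ * r ^ 2 := by
    rw [norm_mul, norm_pow, Complex.norm_of_nonneg hr]
  have hmem : a * r ^ 2 ∈ ball 0 r := by
    rw [mem_ball_zero_iff, hnorm, sq, ← mul_assoc]
    exact mul_lt_of_lt_one_left hpos har
  have hmean : Real.circleAverage (poissonKernel 0 (a * r ^ 2) • fun _ ↦ (1 : ℝ)) 0 r = 1 :=
    (InnerProductSpace.harmonicOnNhd_const 1).circleAverage_poissonKernel_smul hmem
  have hkernel : EqOn (poissonKernel 0 (a * r ^ 2) • fun _ ↦ (1 : ℝ))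
      (fun w ↦ (1 - (‖a‖ * r) ^ 2) • (‖1 - conj a * w‖ ^ 2)⁻¹) (sphere 0 |r|) := fun w hw ↦ by
    have hw' : ‖w‖ = r := by rwa [mem_sphere_zero_iff_norm, abs_of_pos hpos] at hw
    have hdist : ‖w - a * r ^ 2‖ = r * ‖1 - conj a * w‖ := hw' ▸ norm_sub_mul_norm_sq a w
    simp only [Pi.smul_apply', poissonKernel_def, sub_zero, smul_eq_mul, mul_one, hdist, hnorm, hw']
    field_simp
  rw [Real.circleAverage_congr_sphere hkernel, Real.circleAverage_fun_smul, smul_eq_mul] at hmean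
  exact eq_inv_of_mul_eq_one_right hmean

/-- A near-extremal function for point evaluation at `a`: a power of the Szegő kernel, scaled so
that its norm in `S^p` is at most `1`. -/
def peakFunction (p : ℝ) (a w : ℂ) : ℂ :=
  (p / 2 * (1 - ‖a‖ ^ 2) ^ (1 / p) : ℝ) * (1 - conj a * w) ^ ((1 - 2 / p : ℝ) : ℂ)

lemma hasDerivAt_peakFunction (h : ‖a‖ * ‖w‖ < 1) :
    HasDerivAt (peakFunction p a) ((p / 2 * (1 - ‖a‖ ^ 2) ^ (1 / p) : ℝ) *
      ((1 - 2 / p : ℝ) * (1 - conj a * w) ^ ((-(2 / p) : ℝ) : ℂ) * -conj a)) w := by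
  have hbase : HasDerivAt (fun w ↦ 1 - conj a * w) (-conj a) w := by
    simpa only [mul_one, id_eq] using ((hasDerivAt_id w).const_mul (conj a)).const_sub 1
  have hpow := hbase.cpow_const (c := ((1 - 2 / p : ℝ) : ℂ)) (one_sub_conj_mul_mem_slitPlane h)
  have hexp : ((1 - 2 / p : ℝ) : ℂ) - 1 = ((-(2 / p) : ℝ) : ℂ) := by push_cast; ring
  rw [hexp] at hpow
  exact hpow.const_mul _

lemma differentiableOn_peakFunction (ha : a ∈ unitDisk) :
    DifferentiableOn ℂ (peakFunction p a) unitDisk := fun _ hw ↦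
  (hasDerivAt_peakFunction (mul_lt_one_of_nonneg_of_lt_one_left (norm_nonneg a)
    (mem_unitDisk.1 ha) (mem_unitDisk.1 hw).le)).differentiableAt.differentiableWithinAt

lemma norm_deriv_peakFunction_rpow_le (hp : 0 < p) (hp2 : p ≤ 2) (ha : a ∈ unitDisk)
    (hw : w ∈ unitDisk) :
    ‖deriv (peakFunction p a) w‖ ^ p ≤
      (1 - p / 2) ^ p * (1 - ‖a‖ ^ 2) * (‖1 - conj a * w‖ ^ 2)⁻¹ := by
  have ha1 := mem_unitDisk.1 ha
  have hδ := one_sub_norm_sq_pos ha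
  have hcoef : p / 2 * |1 - 2 / p| = 1 - p / 2 := by
    rw [abs_of_nonpos (sub_nonpos.2 ((one_le_div hp).2 hp2))]
    field_simp
    ring
  set x := ‖1 - conj a * w‖ with hx
  have hx0 : 0 ≤ x := norm_nonneg _
  have hderiv : ‖deriv (peakFunction p a) w‖ ≤
      (1 - p / 2) * ((1 - ‖a‖ ^ 2) ^ (1 / p) * x ^ (-(2 / p))) := by
    rw [(hasDerivAt_peakFunction (mul_lt_one_of_nonneg_of_lt_one_left (norm_nonneg a) ha1
      (mem_unitDisk.1 hw).le)).deriv, norm_mul, norm_mul, norm_mul, norm_neg, Complex.norm_conj,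
      Complex.norm_cpow_real, Complex.norm_of_nonneg (by positivity), Complex.norm_real,
      Real.norm_eq_abs, ← hcoef, ← hx]
    calc p / 2 * (1 - ‖a‖ ^ 2) ^ (1 / p) * (|1 - 2 / p| * x ^ (-(2 / p)) * ‖a‖)
        ≤ p / 2 * (1 - ‖a‖ ^ 2) ^ (1 / p) * (|1 - 2 / p| * x ^ (-(2 / p)) * 1) := by gcongr
      _ = p / 2 * |1 - 2 / p| * ((1 - ‖a‖ ^ 2) ^ (1 / p) * x ^ (-(2 / p))) := by ring
  calc ‖deriv (peakFunction p a) w‖ ^ p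
      ≤ ((1 - p / 2) * ((1 - ‖a‖ ^ 2) ^ (1 / p) * x ^ (-(2 / p)))) ^ p := by gcongr
    _ = (1 - p / 2) ^ p * (1 - ‖a‖ ^ 2) * (x ^ 2)⁻¹ := by
        rw [Real.mul_rpow (by linarith) (by positivity),
          Real.mul_rpow (by positivity) (by positivity), ← Real.rpow_mul hδ.le,
          ← Real.rpow_mul hx0, one_div_mul_cancel hp.ne', Real.rpow_one, neg_mul,
          div_mul_cancel₀ _ hp.ne', Real.rpow_neg hx0, Real.rpow_two, mul_assoc]

lemma hardySup_deriv_peakFunction_le (hp : 0 < p) (hp2 : p ≤ 2) (ha : a ∈ unitDisk) :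
    hardySup p (deriv (peakFunction p a)) ≤ ENNReal.ofReal ((1 - p / 2) ^ p) := by
  have ha1 := mem_unitDisk.1 ha
  have hδ := one_sub_norm_sq_pos ha
  have hderiv : ContinuousOn (deriv (peakFunction p a)) unitDisk :=
    ((differentiableOn_peakFunction ha).deriv isOpen_ball).continuousOn
  have hcoef : 0 ≤ (1 - p / 2) ^ p := Real.rpow_nonneg (by linarith) p
  refine hardySup_le_ofReal hp.le hderiv fun r hr ↦ ?_
  have har : ‖a‖ * r ≤ ‖a‖ := mul_le_of_le_one_right (norm_nonneg a) hr.2.le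
  have hsphere := sphere_abs_subset_unitDisk hr
  have hkernel : ContinuousOn (fun w ↦ (‖1 - conj a * w‖ ^ 2)⁻¹) (sphere 0 |r|) := by
    refine ContinuousOn.inv₀ (by fun_prop) fun w hw ↦ pow_ne_zero 2 (norm_ne_zero_iff.2 ?_)
    exact Complex.slitPlane_ne_zero (one_sub_conj_mul_mem_slitPlane
      (mul_lt_one_of_nonneg_of_lt_one_left (norm_nonneg a) ha1 (mem_unitDisk.1 (hsphere hw)).le))
  calc Real.circleAverage (fun w ↦ ‖deriv (peakFunction p a) w‖ ^ p) 0 r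
      ≤ Real.circleAverage
          (fun w ↦ ((1 - p / 2) ^ p * (1 - ‖a‖ ^ 2)) • (‖1 - conj a * w‖ ^ 2)⁻¹) 0 r :=
        Real.circleAverage_mono (circleIntegrable_norm_rpow hp.le (hderiv.mono hsphere))
          hkernel.circleIntegrable'.const_fun_smul
          fun w hw ↦ norm_deriv_peakFunction_rpow_le hp hp2 ha (hsphere hw)
    _ = (1 - p / 2) ^ p * (1 - ‖a‖ ^ 2) * (1 - (‖a‖ * r) ^ 2)⁻¹ := by
        rw [Real.circleAverage_fun_smul, smul_eq_mul,
          circleAverage_inv_norm_one_sub_conj_mul_sq hr.1 (har.trans_lt ha1)]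
    _ ≤ (1 - p / 2) ^ p * (1 - ‖a‖ ^ 2) * (1 - ‖a‖ ^ 2)⁻¹ := by
        have hr0 := hr.1
        gcongr
    _ = (1 - p / 2) ^ p := mul_inv_cancel_right₀ hδ.ne' _

lemma memS_peakFunction (hp : 0 < p) (hp2 : p ≤ 2) (ha : a ∈ unitDisk) :
    MemS p (peakFunction p a) :=
  ⟨differentiableOn_peakFunction ha,
    (hardySup_deriv_peakFunction_le hp hp2 ha).trans_lt ENNReal.ofReal_lt_top⟩

lemma sNorm_peakFunction_le_one (hp : 0 < p) (hp2 : p ≤ 2) (ha : a ∈ unitDisk) :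
    sNorm p (peakFunction p a) ≤ 1 := by
  have hδ := one_sub_norm_sq_pos ha
  have hcenter : ‖peakFunction p a 0‖ ≤ p / 2 := by
    rw [peakFunction, mul_zero, sub_zero, Complex.one_cpow, mul_one,
      Complex.norm_of_nonneg (by positivity)]
    exact mul_le_of_le_one_right (by positivity)
      (Real.rpow_le_one hδ.le (sub_le_self _ (sq_nonneg _)) (by positivity))
  have hderiv : hardyNorm p (deriv (peakFunction p a)) ≤ 1 - p / 2 :=
    hardyNorm_le_of_hardySup_le hp (by linarith) (hardySup_deriv_peakFunction_le hp hp2 ha)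
  rw [sNorm_eq_norm_add_hardyNorm]
  linarith

lemma norm_peakFunction_self (hp : 0 ≤ p) (ha : a ∈ unitDisk) :
    ‖peakFunction p a a‖ = p / 2 / (1 - ‖a‖ ^ 2) ^ (1 / p - 1) := by
  have hδ := one_sub_norm_sq_pos ha
  have hbase : 1 - conj a * a = ((1 - ‖a‖ ^ 2 : ℝ) : ℂ) := by
    rw [Complex.conj_mul']
    push_cast
    rfl
  rw [peakFunction, hbase, norm_mul, Complex.norm_cpow_real, Complex.norm_of_nonneg (by positivity),
    Complex.norm_of_nonneg hδ.le, mul_assoc, ← Real.rpow_add hδ, div_eq_mul_inv _ (_ ^ _),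
    ← Real.rpow_neg hδ.le]
  ring_nf

end PeakFunction

/-- Lemma 3.1(1): for `0 < p < 1`, the point evaluation functional on `S^p` satisfies
`‖δ_z‖ ≍ (1-|z|²)^{-(1/p-1)}`. -/
theorem pointEval_Sp_small (p : ℝ) (hp : 0 < p) (hp1 : p < 1) :
    ∃ c C : ℝ, 0 < c ∧ 0 < C ∧ ∀ z ∈ unitDisk,
      c / (1 - ‖z‖ ^ 2) ^ (1 / p - 1) ≤
        sSup {r : ℝ | ∃ f : ℂ → ℂ, MemS p f ∧ sNorm p f ≤ 1 ∧ r = ‖f z‖} ∧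
      sSup {r : ℝ | ∃ f : ℂ → ℂ, MemS p f ∧ sNorm p f ≤ 1 ∧ r = ‖f z‖} ≤
        C / (1 - ‖z‖ ^ 2) ^ (1 / p - 1) := by
  obtain ⟨C, hC, hupper⟩ := exists_norm_le_mul_sNorm hp hp1
  refine ⟨p / 2, C, by positivity, hC, fun z hz ↦ ?_⟩
  have hpeak : ‖peakFunction p z z‖ ∈
      {r : ℝ | ∃ f : ℂ → ℂ, MemS p f ∧ sNorm p f ≤ 1 ∧ r = ‖f z‖} :=
    ⟨_, memS_peakFunction hp (by linarith) hz, sNorm_peakFunction_le_one hp (by linarith) hz, rfl⟩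
  have hbound : C / (1 - ‖z‖ ^ 2) ^ (1 / p - 1) ∈
      upperBounds {r : ℝ | ∃ f : ℂ → ℂ, MemS p f ∧ sNorm p f ≤ 1 ∧ r = ‖f z‖} := by
    rintro _ ⟨f, hf, hnorm, rfl⟩
    have hδ := one_sub_norm_sq_pos hz
    exact (hupper f hf z hz).trans (by gcongr; exact mul_le_of_le_one_right hC.le hnorm)
  rw [← norm_peakFunction_self hp.le hz]
  exact ⟨le_csSup ⟨_, hbound⟩ hpeak, csSup_le ⟨_, hpeak⟩ hbound⟩
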